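/- Let (R, m, k) be a commutative Noetherian local ring and let M be an Ulrich R-module of dimension s. If L is a finitely generated R-module and there exists an integer n ≥ 1 such that Ext_R^i(L, M) = 0 for all n ≤ i ≤ n+s, then the projective dimension of L over R is finite and pd_R L < n. -/

import Mathlib

open CategoryTheory IsLocalRing

section Prelim

variable (R : Type) [CommRing R]

/-- `Tor_i^R(M, N) = 0`. -/
noncomputable def TorVanish (M N : Type) [AddCommGroup M] [Module R M]
    [AddCommGroup N] [Module R N] (i : ℕ) : Prop :=
  Subsingleton (((Tor (ModuleCat R) i).obj (ModuleCat.of R M)).obj (ModuleCat.of R N))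

/-- `Ext_R^i(M, N) = 0`. -/
noncomputable def ExtVanish (M N : Type) [AddCommGroup M] [Module R M]
    [AddCommGroup N] [Module R N] (i : ℕ) : Prop :=
  Subsingleton (((Ext R (ModuleCat R) i).obj (Opposite.op (ModuleCat.of R M))).obj
    (ModuleCat.of R N))

/-- `pd_R M < n`, expressed by the standard characterization
`Ext_R^i(M, -) = 0` for all `i ≥ n`. -/
def ProjDimLT (M : Type) [AddCommGroup M] [Module R M] (n : ℕ) : Prop :=
  ∀ (N : ModuleCat R) (i : ℕ), n ≤ i → ExtVanish R M N i

/-- `pd_R M < ∞`. -/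
def ProjDimFinite (M : Type) [AddCommGroup M] [Module R M] : Prop :=
  ∃ n, ProjDimLT R M n

/-- `id_R M < n`, expressed by the standard characterization
`Ext_R^i(-, M) = 0` for all `i ≥ n`. -/
def InjDimLT (M : Type) [AddCommGroup M] [Module R M] (n : ℕ) : Prop :=
  ∀ (N : ModuleCat R) (i : ℕ), n ≤ i → ExtVanish R N M i

/-- `id_R M < ∞`. -/
def InjDimFinite (M : Type) [AddCommGroup M] [Module R M] : Prop :=
  ∃ n, InjDimLT R M n

/-- `M` is a Tor-rigid `R`-module. -/
def TorRigid (M : Type) [AddCommGroup M] [Module R M] : Prop :=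
  ∀ (N : ModuleCat R), Module.Finite R N → ∀ n : ℕ, 1 ≤ n → TorVanish R M N n →
    ∀ i : ℕ, n ≤ i → TorVanish R M N i

variable [IsLocalRing R]

/-- The depth of `M`: the supremum of lengths of `M`-regular sequences contained in
the maximal ideal. -/
noncomputable def depth (M : Type) [AddCommGroup M] [Module R M] : ℕ∞ :=
  sSup {n : ℕ∞ | ∃ rs : List R, (∀ x ∈ rs, x ∈ maximalIdeal R) ∧
    RingTheory.Sequence.IsRegular M rs ∧ (rs.length : ℕ∞) = n}

/-- The dimension of a module, i.e. the Krull dimension of `R ⧸ ann M`. -/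
noncomputable def moduleDim (M : Type) [AddCommGroup M] [Module R M] : WithBot ℕ∞ :=
  ringKrullDim (R ⧸ Module.annihilator R M)

/-- `M` is an Ulrich `R`-module of dimension `s` : `M` is nonzero, Cohen–Macaulay of
dimension `s`, and there is an `M`-regular sequence `x₁, …, x_s` in the maximal ideal
with `mM = (x₁, …, x_s)M`. -/
def IsUlrich (M : Type) [AddCommGroup M] [Module R M] (s : ℕ) : Prop :=
  Nontrivial M ∧ moduleDim R M = (s : ℕ∞) ∧ depth R M = (s : ℕ∞) ∧
  ∃ rs : List R, rs.length = s ∧ (∀ x ∈ rs, x ∈ maximalIdeal R) ∧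
    RingTheory.Sequence.IsRegular M rs ∧
    (maximalIdeal R) • (⊤ : Submodule R M) = (Ideal.ofList rs) • ⊤

/-- `R` is a regular local ring: the maximal ideal is generated by `dim R` elements. -/
def IsRegularLocal : Prop :=
  ∃ s : Finset R, Ideal.span (s : Set R) = maximalIdeal R ∧
    (s.card : WithBot ℕ∞) = ringKrullDim R

/-- `R` (of dimension `d`) has minimal multiplicity: there is an `R`-regular sequence
`x₁, …, x_d` in the maximal ideal `m` with `m² = (x₁, …, x_d)m`. -/
def HasMinimalMultiplicity (d : ℕ) : Prop :=
  ∃ rs : List R, rs.length = d ∧ (∀ x ∈ rs, x ∈ maximalIdeal R) ∧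
    RingTheory.Sequence.IsWeaklyRegular R rs ∧
    maximalIdeal R ^ 2 = Ideal.ofList rs * maximalIdeal R

/-- The `n`-th Betti number of `M` over the local ring `R`, i.e. the dimension over the
residue field `k = R ⧸ m` of `Tor_n^R(M, k)` (which is an `m`-torsion module, so we take
the dimension of its reduction mod `m`). -/
noncomputable def betti (M : Type) [AddCommGroup M] [Module R M] (n : ℕ) : ℕ :=
  Module.finrank (R ⧸ maximalIdeal R)
    ((((Tor (ModuleCat R) n).obj (ModuleCat.of R M)).obj
        (ModuleCat.of R (R ⧸ maximalIdeal R))) ⧸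
      (maximalIdeal R • (⊤ : Submodule R
        (((Tor (ModuleCat R) n).obj (ModuleCat.of R M)).obj
          (ModuleCat.of R (R ⧸ maximalIdeal R))))))

end Prelim

/-!
Write `x` for the given regular sequence and `V = M ⧸ (x)M`. The long exact `Ext` sequences of
multiplication by the `xᵢ` trade each entry of `x` for one of the vanishing degrees, leaving
`Extⁿ(L, V) = 0`. Since `𝔪M ⊆ (x)M`, the module `V` is a nonzero vector space over the residue
field, so in a minimal cover `0 → K → F → L → 0` every map `F → V` kills `K`, and therefore
`Extⁿ⁻¹(K, V) = 0`. Passing to syzygies `n` times gives `Hom(K, V) = 0` for the `n`-th syzygy `K`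
of `L`, hence `K = 0` by Nakayama's lemma.
-/

universe v u

open Abelian Module RingTheory.Sequence TensorProduct

section AbelianCategory

variable {C : Type u} [Category.{v} C] [Abelian C]

lemma subsingleton_ext_X₁_of_subsingleton_ext_X₃ [HasExt C] {S : ShortComplex C}
    (hS : S.ShortExact) [Projective S.X₂] {Y : C} (hY : ∀ g : S.X₂ ⟶ Y, S.f ≫ g = 0) {n : ℕ}
    (h : Subsingleton (Abelian.Ext S.X₃ Y (n + 1))) : Subsingleton (Abelian.Ext S.X₁ Y n) := by
  have precomp_eq_zero (y : Abelian.Ext S.X₂ Y n) :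
      (Ext.mk₀ S.f).comp y (zero_add n) = 0 := by
    cases n with
    | zero =>
      obtain ⟨g, rfl⟩ := (Ext.mk₀_bijective _ _).2 y
      rw [Ext.mk₀_comp_mk₀, hY, Ext.mk₀_zero]
    | succ n => rw [Ext.eq_zero_of_projective y, Ext.comp_zero]
  refine subsingleton_of_forall_eq 0 fun x ↦ ?_
  obtain ⟨y, rfl⟩ := Ext.contravariant_sequence_exact₁ hS Y x (add_comm 1 n)
    (Subsingleton.elim _ _)
  exact precomp_eq_zero y

lemma subsingleton_ext_X₃_of_subsingleton_ext_X₂_of_subsingleton_ext_X₁ [HasExt C] {X : C}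
    {S : ShortComplex C} (hS : S.ShortExact) {n : ℕ} (h₂ : Subsingleton (Abelian.Ext X S.X₂ n))
    (h₁ : Subsingleton (Abelian.Ext X S.X₁ (n + 1))) : Subsingleton (Abelian.Ext X S.X₃ n) := by
  refine subsingleton_of_forall_eq 0 fun x ↦ ?_
  obtain ⟨y, rfl⟩ := Ext.covariant_sequence_exact₃ X hS x rfl (Subsingleton.elim _ _)
  rw [Subsingleton.elim y 0, Ext.zero_comp]

lemma subsingleton_ext_congr_right [HasExt C] (X : C) {Y Y' : C} (e : Y ≅ Y') (n : ℕ) :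
    Subsingleton (Abelian.Ext X Y n) ↔ Subsingleton (Abelian.Ext X Y' n) :=
  ((extFunctorObj X n).mapIso e).addCommGroupIsoToAddEquiv.toEquiv.subsingleton_congr

lemma subsingleton_ext_obj_iff (R : Type*) [Ring R] [Linear R C] [EnoughProjectives C] [HasExt C]
    (X Y : C) {n : ℕ} (hn : n ≠ 0) :
    Subsingleton (((_root_.Ext R C n).obj (Opposite.op X)).obj Y) ↔
      Subsingleton (Abelian.Ext X Y n) := by
  obtain ⟨n, rfl⟩ := Nat.exists_eq_succ_of_ne_zero hn
  let P := projectiveResolution X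
  have exact_iff : Subsingleton (((_root_.Ext R C (n + 1)).obj (Opposite.op X)).obj Y) ↔
      ∀ f : P.complex.X (n + 1) ⟶ Y, P.complex.d (n + 2) (n + 1) ≫ f = 0 →
        ∃ g : P.complex.X n ⟶ Y, P.complex.d (n + 1) n ≫ g = f := by
    rw [← ModuleCat.isZero_iff_subsingleton, (P.isoExt (R := R) (n + 1) Y).isZero_iff,
      ← HomologicalComplex.exactAt_iff_isZero_homology,
      HomologicalComplex.exactAt_iff' _ n (n + 1) (n + 2) (by simp) (by simp),
      ShortComplex.moduleCat_exact_iff]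
    rfl
  rw [exact_iff]
  constructor
  · intro h
    refine subsingleton_of_forall_eq 0 fun α ↦ ?_
    obtain ⟨f, hf, rfl⟩ := P.extMk_surjective α (n + 2) rfl
    exact (P.extMk_eq_zero_iff f (n + 2) rfl hf n rfl).2 (h f hf)
  · intro h f hf
    exact (P.extMk_eq_zero_iff f (n + 2) rfl hf n rfl).1 (Subsingleton.elim _ _)

end AbelianCategory

section RegularSequence

variable {R : Type u} [CommRing R] [Small.{v} R] (L : ModuleCat.{v} R)
  {M : Type v} [AddCommGroup M] [Module R M]

lemma subsingleton_ext_quotient_ofList_smul_top {rs : List R} (hrs : IsWeaklyRegular M rs) {n : ℕ}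
    (h : ∀ i, n ≤ i → i ≤ n + rs.length → Subsingleton (Abelian.Ext L (ModuleCat.of R M) i)) :
    Subsingleton (Abelian.Ext L
      (ModuleCat.of R (M ⧸ (Ideal.ofList rs • ⊤ : Submodule R M))) n) := by
  induction rs generalizing M with
  | nil =>
    have e : (M ⧸ (Ideal.ofList ([] : List R) • ⊤ : Submodule R M)) ≃ₗ[R] M :=
      Submodule.quotEquivOfEqBot _ (by rw [Ideal.ofList_nil, Submodule.bot_smul])
    exact (subsingleton_ext_congr_right L e.toModuleIso n).2 (h n le_rfl (Nat.le_add_right _ _))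
  | cons x rs ih =>
    obtain ⟨hx, hrs⟩ := (isWeaklyRegular_cons_iff M x rs).1 hrs
    let e := Submodule.quotOfListConsSMulTopEquivQuotSMulTopInner M x rs
    refine (subsingleton_ext_congr_right L e.toModuleIso n).2 (ih hrs fun i hi hi' ↦ ?_)
    rw [List.length_cons] at h
    have hx' : IsSMulRegular (ModuleCat.of R M) x := hx
    exact subsingleton_ext_X₃_of_subsingleton_ext_X₂_of_subsingleton_ext_X₁
      hx'.smulShortComplex_shortExact (h i hi (by lia)) (h (i + 1) (by lia) (by lia))

end RegularSequence

lemma map_eq_zero_of_mem_smul_top {R M V : Type*} [CommRing R] [AddCommGroup M] [Module R M]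
    [AddCommGroup V] [Module R V] {I : Ideal R} (hV : IsTorsionBySet R V I) (g : M →ₗ[R] V)
    {x : M} (hx : x ∈ I • (⊤ : Submodule R M)) : g x = 0 := by
  suffices I • (⊤ : Submodule R M) ≤ LinearMap.ker g from this hx
  refine Submodule.smul_le.2 fun r hr m _ ↦ ?_
  rw [LinearMap.mem_ker, map_smul]
  exact hV (a := ⟨r, hr⟩)

section LocalRing

variable {R : Type u} [CommRing R] [IsLocalRing R]

lemma subsingleton_of_subsingleton_linearMap_of_isTorsionBySet (L V : Type*) [AddCommGroup L]
    [Module R L] [Module.Finite R L] [AddCommGroup V] [Module R V] [Nontrivial V]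
    (hV : IsTorsionBySet R V (maximalIdeal R)) (h : Subsingleton (L →ₗ[R] V)) :
    Subsingleton L := by
  let _ : Module (ResidueField R) V := hV.module
  have : IsScalarTower R (ResidueField R) V := hV.isScalarTower
  have : Subsingleton (ResidueField R ⊗[R] L →ₗ[ResidueField R] V) :=
    (LinearMap.liftBaseChangeEquiv (ResidueField R)).symm.subsingleton
  rw [← IsLocalRing.subsingleton_tensorProduct (R := R)]
  by_contra! _
  exact not_subsingleton (ResidueField R ⊗[R] L →ₗ[ResidueField R] V) ‹_›

lemma ker_constr_le_maximalIdeal_smul_top {ι F L : Type*} [Finite ι] [AddCommGroup F] [Module R F]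
    [AddCommGroup L] [Module R L] (e : Basis ι R F)
    (b : Basis ι (ResidueField R) (ResidueField R ⊗[R] L))
    {g : ι → L} (hg : ∀ i, 1 ⊗ₜ g i = b i) :
    LinearMap.ker (e.constr R g) ≤ maximalIdeal R • (⊤ : Submodule R F) := by
  intro x hx
  have := Fintype.ofFinite ι
  have sum_residue_smul : ∑ i, residue R (e.repr x i) • b i = 0 := calc
    _ = ∑ i, (1 : ResidueField R) ⊗ₜ[R] (e.repr x i • g i) := by
      simp only [← hg, ← ResidueField.algebraMap_eq, algebraMap_smul, TensorProduct.tmul_smul]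
    _ = (1 : ResidueField R) ⊗ₜ[R] e.constr R g x := by
      rw [Basis.constr_apply_fintype R e g x, TensorProduct.tmul_sum]
      simp only [Basis.equivFun_apply]
    _ = 0 := by rw [LinearMap.mem_ker.1 hx, TensorProduct.tmul_zero]
  have residue_repr := Fintype.linearIndependent_iff.1 b.linearIndependent _ sum_residue_smul
  rw [← e.sum_repr x]
  exact Submodule.sum_mem _ fun i _ ↦
    Submodule.smul_mem_smul ((residue_eq_zero_iff _).1 (residue_repr i)) trivial

lemma exists_free_cover_ker_le_maximalIdeal_smul_top [Small.{v} R] (L : Type v) [AddCommGroup L]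
    [Module R L] [Module.Finite R L] :
    ∃ (F : Type v) (_ : AddCommGroup F) (_ : Module R F) (_ : Module.Free R F)
      (_ : Module.Finite R F) (f : F →ₗ[R] L), Function.Surjective f ∧
        LinearMap.ker f ≤ maximalIdeal R • (⊤ : Submodule R F) := by
  let b := Module.finBasis (ResidueField R) (ResidueField R ⊗[R] L)
  choose g hg using fun i ↦
    TensorProduct.mk_surjective R L (ResidueField R) residue_surjective (b i)
  let n := finrank (ResidueField R) (ResidueField R ⊗[R] L)
  let e : Basis (Fin n) R (Fin n →₀ Shrink.{v} R) :=
    ⟨Finsupp.mapRange.linearEquiv (Shrink.linearEquiv R R)⟩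
  refine ⟨_, _, _, inferInstance, inferInstance, e.constr R g, ?_,
    ker_constr_le_maximalIdeal_smul_top e b hg⟩
  rw [← LinearMap.range_eq_top, e.constr_range]
  exact span_eq_top_of_tmul_eq_basis g b hg

theorem hasProjectiveDimensionLT_of_subsingleton_ext [IsNoetherianRing R] [Small.{v} R]
    (L V : ModuleCat.{v} R) [Module.Finite R L] [Nontrivial V]
    (hV : IsTorsionBySet R V (maximalIdeal R)) {n : ℕ}
    (h : Subsingleton (Abelian.Ext L V n)) : HasProjectiveDimensionLT L n := by
  induction n generalizing L with
  | zero =>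
    have : Subsingleton (L →ₗ[R] V) :=
      (Ext.addEquiv₀.trans ModuleCat.homAddEquiv).symm.subsingleton
    rw [hasProjectiveDimensionLT_zero_iff_isZero, ModuleCat.isZero_iff_subsingleton]
    exact subsingleton_of_subsingleton_linearMap_of_isTorsionBySet L V hV this
  | succ n ih =>
    obtain ⟨F, _, _, _, _, f, hf, hker⟩ :=
      exists_free_cover_ker_le_maximalIdeal_smul_top (R := R) L
    have hS := LinearMap.shortExact_shortComplexKer hf
    have hKV : Subsingleton (Abelian.Ext f.shortComplexKer.X₁ V n) := by
      refine subsingleton_ext_X₁_of_subsingleton_ext_X₃ hS (fun g ↦ ?_) h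
      ext x
      exact map_eq_zero_of_mem_smul_top hV g.hom (hker x.2)
    exact hS.hasProjectiveDimensionLT_X₃ n (ih f.shortComplexKer.X₁ hKV) inferInstance

end LocalRing

theorem statement3_general {R : Type u} [CommRing R] [IsNoetherianRing R] [IsLocalRing R]
    [Small.{v} R] {M : Type v} [AddCommGroup M] [Module R M] {rs : List R}
    (hrs : IsRegular M rs)
    (hM : maximalIdeal R • (⊤ : Submodule R M) ≤ Ideal.ofList rs • ⊤)
    (L : ModuleCat.{v} R) [Module.Finite R L] {n : ℕ}
    (hvan : ∀ i, n ≤ i → i ≤ n + rs.length → Subsingleton (Abelian.Ext L (ModuleCat.of R M) i)) :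
    HasProjectiveDimensionLT L n := by
  let V := ModuleCat.of R (M ⧸ (Ideal.ofList rs • ⊤ : Submodule R M))
  have : Nontrivial V := Submodule.Quotient.nontrivial_iff.2 hrs.top_ne_smul.symm
  have hV : IsTorsionBySet R V (maximalIdeal R) :=
    (isTorsionBySet_quotient_iff _ _).2 fun _ _ hr ↦ hM (Submodule.smul_mem_smul hr trivial)
  exact hasProjectiveDimensionLT_of_subsingleton_ext L V hV
    (subsingleton_ext_quotient_ofList_smul_top L hrs.toIsWeaklyRegular hvan)

theorem statement3 (R : Type) [CommRing R] [IsNoetherianRing R] [IsLocalRing R]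
    (M : Type) [AddCommGroup M] [Module R M] [Module.Finite R M]
    (s : ℕ) (hM : IsUlrich R M s)
    (L : Type) [AddCommGroup L] [Module R L] [Module.Finite R L]
    (n : ℕ) (hn : 1 ≤ n)
    (hvan : ∀ i : ℕ, n ≤ i → i ≤ n + s → ExtVanish R L M i) :
    ProjDimFinite R L ∧ ProjDimLT R L n := by
  obtain ⟨_, _, _, rs, rfl, _, hrs, hMrs⟩ := hM
  have extVanish_iff (N : Type) [AddCommGroup N] [Module R N] {i : ℕ} (hi : n ≤ i) :=
    subsingleton_ext_obj_iff R (ModuleCat.of R L) (ModuleCat.of R N) (n := i) (by lia)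
  have hpd : HasProjectiveDimensionLT (ModuleCat.of R L) n :=
    statement3_general hrs hMrs.le (ModuleCat.of R L) fun i hi hi' ↦
      (extVanish_iff M hi).1 (hvan i hi hi')
  have hL : ProjDimLT R L n := fun N i hi ↦
    (extVanish_iff N hi).2 (HasProjectiveDimensionLT.subsingleton _ n i hi _)
  exact ⟨⟨n, hL⟩, hL⟩
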